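/- Pseudo-conformal conjugation identity for the magnetic Schrödinger operator: Let u_c : (0,∞) × ℝ³ → ℂ and B : (0,∞) × ℝ³ → ℝ³ be of class C². For t > 0 define u(t,x) = (it)^{−3/2} e^{i|x|²/(2t)} · conj(u_c(1/t, x/t)) and A(t,x) = −t^{−1} B(1/t, x/t). Then for all t > 0 and x ∈ ℝ³, with s = 1/t and y = x/t: i∂_t u(t,x) + (1/2)(Δ_{A(t,·)} u(t,·))(x) = t^{−2} (it)^{−3/2} e^{i|x|²/(2t)} · conj( i∂_s u_c(s,y) + (1/2)(Δ_{B(s,·)} u_c(s,·))(y) − B̌(s,y) u_c(s,y) ), where B̌(s,y) = s^{−1} y·B(s,y). -/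

import Mathlib

/-!
The phase `E(t,x) = e^{i|x|²/(2t)}` satisfies `∂ₖE = (i xₖ/t) E` and `∂ₜE = -(i|x|²/(2t²)) E`, while
`∂ₜ (it)^{-3/2} = -(3/(2t)) (it)^{-3/2}`. Writing `f = u_c(1/t, ·)`, the product and chain rules
express every derivative of `u` as `(it)^{-3/2} E` times a combination of conjugated derivatives of
`u_c` at `(1/t, x/t)`. In `i∂ₜu + ½Δu` the terms `3i/(2t)`, `|x|²/(2t²)` and `i t⁻² x·∇` cancel in
pairs. In the magnetic part, the derivative of the phase in `-iA·∇u` produces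
`-t⁻² (x·B) conj u_c`, which is the conjugated `B̌`-term.
-/

noncomputable section
open MeasureTheory Real
open scoped RealInnerProductSpace

/-- Physical space `ℝ³` with the Euclidean norm. -/
abbrev R3 : Type := EuclideanSpace ℝ (Fin 3)

/-- Spatial partial derivative `∂ₖ` of a complex-valued function on `ℝ³`. -/
def pdC (k : Fin 3) (f : R3 → ℂ) (x : R3) : ℂ := fderiv ℝ f x (EuclideanSpace.single k 1)

/-- Spatial partial derivative `∂ₖ` of a real-valued function on `ℝ³`. -/
def pdR (k : Fin 3) (f : R3 → ℝ) (x : R3) : ℝ := fderiv ℝ f x (EuclideanSpace.single k 1)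

/-- Laplacian of a complex-valued function on `ℝ³`. -/
def lapC (f : R3 → ℂ) (x : R3) : ℂ := ∑ k : Fin 3, pdC k (pdC k f) x

/-- Laplacian of a real-valued function on `ℝ³`. -/
def lapR (f : R3 → ℝ) (x : R3) : ℝ := ∑ k : Fin 3, pdR k (pdR k f) x

/-- Divergence `∇·A` of a vector field on `ℝ³`. -/
def divg (A : R3 → R3) (x : R3) : ℝ := ∑ k : Fin 3, pdR k (fun y => A y k) x

/-- Component `k` of the covariant gradient `∇_A u = ∇u − iAu`. -/
def covGrad (A : R3 → R3) (u : R3 → ℂ) (k : Fin 3) (x : R3) : ℂ :=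
  pdC k u x - Complex.I * (A x k : ℂ) * u x

/-- Covariant Laplacian `Δ_A u = Δu − 2iA·∇u − i(∇·A)u − |A|²u`. -/
def covLap (A : R3 → R3) (u : R3 → ℂ) (x : R3) : ℂ :=
  lapC u x - 2 * Complex.I * (∑ k : Fin 3, (A x k : ℂ) * pdC k u x)
    - Complex.I * (divg A x : ℂ) * u x - ((∑ k : Fin 3, (A x k)^2 : ℝ) : ℂ) * u x

/-- Time derivative `∂_t` of a time-dependent complex-valued function. -/
def dtC (f : ℝ → R3 → ℂ) (t : ℝ) (x : R3) : ℂ := deriv (fun s => f s x) t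

/-- Time derivative `∂_t` of a time-dependent real-valued function. -/
def dtR (f : ℝ → R3 → ℝ) (t : ℝ) (x : R3) : ℝ := deriv (fun s => f s x) t

/-- `(it)^{−3/2} = t^{−3/2} e^{−3πi/4}` (principal branch, for `t > 0`). -/
def itPow (t : ℝ) : ℂ :=
  ((t ^ (-(3:ℝ)/2) : ℝ) : ℂ) * Complex.exp (-(3 * (π:ℂ) * Complex.I) / 4)

/-- The quadratic phase `e^{i|x|²/(2t)}`. -/
def phase (t : ℝ) (x : R3) : ℂ := Complex.exp (Complex.I * (‖x‖^2 : ℝ) / (2 * t))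

/-! ### Spatial derivatives -/

lemma pdC_mul (k : Fin 3) {f g : R3 → ℂ} {x : R3} (hf : DifferentiableAt ℝ f x)
    (hg : DifferentiableAt ℝ g x) :
    pdC k (fun y => f y * g y) x = f x * pdC k g x + pdC k f x * g x := by
  unfold pdC
  rw [fderiv_fun_mul hf hg]
  simp [mul_comm]

lemma pdC_add (k : Fin 3) {f g : R3 → ℂ} {x : R3} (hf : DifferentiableAt ℝ f x)
    (hg : DifferentiableAt ℝ g x) :
    pdC k (fun y => f y + g y) x = pdC k f x + pdC k g x := by
  unfold pdC
  rw [fderiv_fun_add hf hg]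
  simp

lemma pdC_const_mul (k : Fin 3) (c : ℂ) {f : R3 → ℂ} {x : R3} (hf : DifferentiableAt ℝ f x) :
    pdC k (fun y => c * f y) x = c * pdC k f x := by
  unfold pdC
  rw [fderiv_const_mul hf]
  simp

lemma hasFDerivAt_conj_smul {f : R3 → ℂ} (r : ℝ) {x : R3} (hf : DifferentiableAt ℝ f (r • x)) :
    HasFDerivAt (fun y => (starRingEnd ℂ) (f (r • y)))
      ((Complex.conjCLE : ℂ →L[ℝ] ℂ).comp
        ((fderiv ℝ f (r • x)).comp (r • ContinuousLinearMap.id ℝ R3))) x := by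
  have h1 : HasFDerivAt (fun y : R3 => r • y) (r • ContinuousLinearMap.id ℝ R3) x :=
    (hasFDerivAt_id x).const_smul r
  exact (Complex.conjCLE : ℂ →L[ℝ] ℂ).hasFDerivAt.comp x (hf.hasFDerivAt.comp x h1)

/-- `∂ₖ (conj f(r x)) = r · conj (∂ₖf)(r x)`, as conjugation is real-linear. -/
lemma pdC_conj_smul (k : Fin 3) {f : R3 → ℂ} (r : ℝ) {x : R3}
    (hf : DifferentiableAt ℝ f (r • x)) :
    pdC k (fun y => (starRingEnd ℂ) (f (r • y))) x
      = r * (starRingEnd ℂ) (pdC k f (r • x)) := by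
  unfold pdC
  rw [(hasFDerivAt_conj_smul r hf).fderiv]
  simp

lemma hasFDerivAt_coord (k : Fin 3) (x : R3) :
    HasFDerivAt (fun y : R3 => ((y k : ℝ) : ℂ))
      (Complex.ofRealCLM.comp (EuclideanSpace.proj k : R3 →L[ℝ] ℝ)) x :=
  (Complex.ofRealCLM.comp (EuclideanSpace.proj k : R3 →L[ℝ] ℝ)).hasFDerivAt

lemma pdC_coord (k : Fin 3) (x : R3) : pdC k (fun y : R3 => ((y k : ℝ) : ℂ)) x = 1 := by
  unfold pdC
  rw [(hasFDerivAt_coord k x).fderiv]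
  simp

lemma hasFDerivAt_phase (t : ℝ) (x : R3) :
    HasFDerivAt (phase t)
      (phase t x • ((Complex.I / (2 * t)) • Complex.ofRealCLM.comp (2 • innerSL ℝ x))) x := by
  have h1 : HasFDerivAt (fun y : R3 => ‖y‖ ^ 2) (2 • innerSL ℝ x) x :=
    (hasStrictFDerivAt_norm_sq x).hasFDerivAt
  have h2 := (Complex.ofRealCLM.hasFDerivAt.comp x h1).const_mul (Complex.I / (2 * t))
  have e : phase t = fun y : R3 => Complex.exp (Complex.I / (2 * t) * ((‖y‖ ^ 2 : ℝ) : ℂ)) := by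
    funext y
    unfold phase
    congr 1
    ring
  rw [e]
  exact h2.cexp

lemma pdC_phase (k : Fin 3) (t : ℝ) (x : R3) :
    pdC k (phase t) x = (Complex.I / t * x k) * phase t x := by
  unfold pdC
  rw [(hasFDerivAt_phase t x).fderiv]
  simp [EuclideanSpace.inner_single_right]
  ring

lemma differentiable_pdC (k : Fin 3) {f : R3 → ℂ} (hf : ContDiff ℝ 2 f) :
    Differentiable ℝ (pdC k f) := by
  have h : ContDiff ℝ 1 (fderiv ℝ f) := hf.fderiv_right (by norm_num)
  exact (h.differentiable (by norm_num)).clm_apply (differentiable_const _)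

/-- Spatial gradient of the pseudo-conformal transform of `f`. -/
lemma pdC_transform (k : Fin 3) (c : ℂ) (t : ℝ) {f : R3 → ℂ} (hf : Differentiable ℝ f) (x : R3) :
    pdC k (fun y => c * phase t y * (starRingEnd ℂ) (f (t⁻¹ • y))) x
      = c * phase t x * (Complex.I / t * x k * (starRingEnd ℂ) (f (t⁻¹ • x))
        + (t : ℂ)⁻¹ * (starRingEnd ℂ) (pdC k f (t⁻¹ • x))) := by
  have hE := (hasFDerivAt_phase t x).differentiableAt
  rw [pdC_mul k (hE.const_mul c) (hasFDerivAt_conj_smul _ (hf _)).differentiableAt,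
    pdC_const_mul k c hE, pdC_phase, pdC_conj_smul k _ (hf _)]
  push_cast
  ring

lemma pdC_pdC_transform (k : Fin 3) (c : ℂ) (t : ℝ) {f : R3 → ℂ} (hf : ContDiff ℝ 2 f) (x : R3) :
    pdC k (pdC k (fun y => c * phase t y * (starRingEnd ℂ) (f (t⁻¹ • y)))) x
      = c * phase t x * ((Complex.I / t + (Complex.I / t * x k) ^ 2)
          * (starRingEnd ℂ) (f (t⁻¹ • x))
        + 2 * (Complex.I / t * x k) * (t : ℂ)⁻¹ * (starRingEnd ℂ) (pdC k f (t⁻¹ • x))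
        + ((t : ℂ)⁻¹) ^ 2 * (starRingEnd ℂ) (pdC k (pdC k f) (t⁻¹ • x))) := by
  have hd : Differentiable ℝ f := hf.differentiable (by norm_num)
  have hd' := differentiable_pdC k hf
  have hE := (hasFDerivAt_phase t x).differentiableAt
  have hX := (hasFDerivAt_coord k x).differentiableAt
  have hv := (hasFDerivAt_conj_smul t⁻¹ (hd (t⁻¹ • x))).differentiableAt
  have hw := (hasFDerivAt_conj_smul t⁻¹ (hd' (t⁻¹ • x))).differentiableAt
  rw [funext (pdC_transform k c t hd)]
  rw [pdC_mul k (hE.const_mul c) (((hX.const_mul _).fun_mul hv).fun_add (hw.const_mul _)),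
    pdC_const_mul k c hE, pdC_add k ((hX.const_mul _).fun_mul hv) (hw.const_mul _),
    pdC_mul k (hX.const_mul _) hv, pdC_const_mul k _ hX, pdC_const_mul k _ hw, pdC_phase,
    pdC_coord, pdC_conj_smul k _ (hd _), pdC_conj_smul k _ (hd' _)]
  push_cast
  ring

/-- For `r = 1/t` and `F = B(1/t, ·)` this gives `∇·A = -t⁻² (∇·B)(1/t, x/t)`. -/
lemma pdR_scaled (k : Fin 3) (r : ℝ) {F : R3 → R3} (hF : Differentiable ℝ F) (x : R3) :
    pdR k (fun y => (-r • F (r • y)) k) x = -r ^ 2 * pdR k (fun y => F y k) (r • x) := by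
  have hFk : Differentiable ℝ (fun y => F y k) := by fun_prop
  have h1 : HasFDerivAt (fun y : R3 => r • y) (r • ContinuousLinearMap.id ℝ R3) x :=
    (hasFDerivAt_id x).const_smul r
  have h2 := (((hFk (r • x)).hasFDerivAt.comp x h1).const_mul (-r))
  have h3 : HasFDerivAt (fun y => (-r • F (r • y)) k) _ x := h2
  unfold pdR
  rw [h3.fderiv]
  simp
  ring

/-! ### Time derivatives -/

lemma hasDerivAt_itPow {t : ℝ} (ht : 0 < t) :
    HasDerivAt itPow (-(3 / (2 * t)) * itPow t) t := by
  have h := ((Real.hasDerivAt_rpow_const (p := -(3 : ℝ) / 2) (Or.inl ht.ne')).ofReal_comp).mul_const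
    (Complex.exp (-(3 * (π:ℂ) * Complex.I) / 4))
  refine h.congr_deriv ?_
  rw [Real.rpow_sub_one ht.ne']
  unfold itPow
  push_cast
  have : (t : ℂ) ≠ 0 := by exact_mod_cast ht.ne'
  field_simp

lemma hasDerivAt_phase {t : ℝ} (ht : 0 < t) (x : R3) :
    HasDerivAt (fun s => phase s x)
      (-(Complex.I * (‖x‖ ^ 2 : ℝ) / (2 * t ^ 2)) * phase t x) t := by
  have h1 := ((hasDerivAt_inv ht.ne').ofReal_comp.const_mul
    (Complex.I * (‖x‖ ^ 2 : ℝ) / 2)).cexp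
  convert h1 using 1
  · funext s
    unfold phase
    congr 1
    push_cast
    ring
  · unfold phase
    rw [mul_comm]
    congr 1
    · congr 1
      push_cast
      ring
    · push_cast
      ring

lemma clm_sum_coord (L : R3 →L[ℝ] ℂ) (x : R3) :
    L x = ∑ k : Fin 3, (x k : ℂ) * L (EuclideanSpace.single k 1) := by
  have h : x = ∑ k : Fin 3, x k • EuclideanSpace.single k (1 : ℝ) := by
    ext j
    fin_cases j <;> simp [Fin.sum_univ_three]
  conv_lhs => rw [h]
  simp

/-- Derivative of `conj (u_c(1/t, x/t))` along the curve `t ↦ (1/t, x/t)`. -/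
lemma hasDerivAt_conj_path {uc : ℝ → R3 → ℂ} {t : ℝ} (ht : 0 < t) (x : R3)
    (h : DifferentiableAt ℝ (fun p : ℝ × R3 => uc p.1 p.2) (t⁻¹, t⁻¹ • x)) :
    HasDerivAt (fun s : ℝ => (starRingEnd ℂ) (uc s⁻¹ (s⁻¹ • x)))
      (-((t : ℂ) ^ 2)⁻¹ * (starRingEnd ℂ) (dtC uc t⁻¹ (t⁻¹ • x)
        + ∑ k : Fin 3, (x k : ℂ) * pdC k (uc t⁻¹) (t⁻¹ • x))) t := by
  set D := fderiv ℝ (fun p : ℝ × R3 => uc p.1 p.2) (t⁻¹, t⁻¹ • x) with hD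
  have hdt : dtC uc t⁻¹ (t⁻¹ • x) = D (1, 0) := by
    have h2 := h.hasFDerivAt.comp_hasDerivAt t⁻¹
      ((hasDerivAt_id t⁻¹).prodMk (hasDerivAt_const t⁻¹ (t⁻¹ • x)))
    exact h2.deriv
  have hpd : ∀ k, pdC k (uc t⁻¹) (t⁻¹ • x)
      = D.comp (ContinuousLinearMap.inr ℝ ℝ R3) (EuclideanSpace.single k 1) := by
    intro k
    have h2 := h.hasFDerivAt.comp (t⁻¹ • x) (hasFDerivAt_prodMk_right t⁻¹ (t⁻¹ • x))
    have h3 : HasFDerivAt (uc t⁻¹) (D.comp (ContinuousLinearMap.inr ℝ ℝ R3)) (t⁻¹ • x) := h2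
    unfold pdC
    rw [h3.fderiv]
  have hi := hasDerivAt_inv ht.ne'
  have h2 := (Complex.conjCLE : ℂ →L[ℝ] ℂ).hasFDerivAt.comp_hasDerivAt t
    (h.hasFDerivAt.comp_hasDerivAt t (hi.prodMk (hi.smul_const x)))
  refine h2.congr_deriv ?_
  simp_rw [hpd]
  rw [← clm_sum_coord, hdt]
  have e : ((-(t ^ 2)⁻¹, -(t ^ 2)⁻¹ • x) : ℝ × R3) = (-(t ^ 2)⁻¹) • ((1, 0) + (0, x)) := by
    simp
  rw [e, ← hD, map_smul, map_add]
  simp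
  ring

/-! ### The conjugation identity -/

/-- pseudo-conformal conjugation identity for the magnetic Schrödinger operator.
With `u(t,x) = (it)^{−3/2} e^{i|x|²/(2t)} conj(u_c(1/t, x/t))` and `A(t,x) = −t⁻¹ B(1/t, x/t)`,
one has, with `s = 1/t`, `y = x/t`,
`i∂_t u + (1/2)Δ_A u = t⁻² (it)^{−3/2} e^{i|x|²/(2t)} conj(i∂_s u_c + (1/2)Δ_B u_c − B̌ u_c)`,
where `B̌(s,y) = s⁻¹ y·B(s,y)`. -/
theorem pseudoConformal_conjugation
    (uc : ℝ → R3 → ℂ) (B : ℝ → R3 → R3)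
    (huc : ContDiffOn ℝ 2 (fun p : ℝ × R3 => uc p.1 p.2) (Set.Ioi (0:ℝ) ×ˢ Set.univ))
    (hB : ContDiffOn ℝ 2 (fun p : ℝ × R3 => B p.1 p.2) (Set.Ioi (0:ℝ) ×ˢ Set.univ))
    (u : ℝ → R3 → ℂ) (A : ℝ → R3 → R3)
    (hu : ∀ t x, u t x =
      itPow t * Complex.exp (Complex.I * (‖x‖^2 : ℝ) / (2 * t)) *
        (starRingEnd ℂ) (uc t⁻¹ (t⁻¹ • x)))
    (hA : ∀ t x, A t x = -t⁻¹ • B t⁻¹ (t⁻¹ • x)) :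
    ∀ t : ℝ, 0 < t → ∀ x : R3,
      Complex.I * dtC u t x + (1/2) * covLap (A t) (u t) x =
        (((t^2)⁻¹ : ℝ) : ℂ) * itPow t * Complex.exp (Complex.I * (‖x‖^2 : ℝ) / (2 * t)) *
          (starRingEnd ℂ)
            (Complex.I * dtC uc t⁻¹ (t⁻¹ • x)
              + (1/2) * covLap (B t⁻¹) (uc t⁻¹) (t⁻¹ • x)
              - (((t⁻¹)⁻¹ * ⟪t⁻¹ • x, B t⁻¹ (t⁻¹ • x)⟫ : ℝ) : ℂ) * uc t⁻¹ (t⁻¹ • x)) := by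
  intro t ht x
  have ht' : (t : ℂ) ≠ 0 := by exact_mod_cast ht.ne'
  have hopen : IsOpen (Set.Ioi (0:ℝ) ×ˢ (Set.univ : Set R3)) := isOpen_Ioi.prod isOpen_univ
  have hmem : ∀ y : R3, (t⁻¹, y) ∈ Set.Ioi (0:ℝ) ×ˢ (Set.univ : Set R3) := fun y =>
    ⟨inv_pos.mpr ht, Set.mem_univ _⟩
  have hf : ContDiff ℝ 2 (uc t⁻¹) := contDiff_iff_contDiffAt.mpr fun y =>
    (huc.contDiffAt (hopen.mem_nhds (hmem y))).comp y (contDiffAt_const.prodMk contDiffAt_id)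
  have hF : ContDiff ℝ 2 (B t⁻¹) := contDiff_iff_contDiffAt.mpr fun y =>
    (hB.contDiffAt (hopen.mem_nhds (hmem y))).comp y (contDiffAt_const.prodMk contDiffAt_id)
  have hfd : Differentiable ℝ (uc t⁻¹) := hf.differentiable (by norm_num)
  have hFd : Differentiable ℝ (B t⁻¹) := hF.differentiable (by norm_num)
  have hu' : u t = fun y => itPow t * phase t y * (starRingEnd ℂ) (uc t⁻¹ (t⁻¹ • y)) :=
    funext (hu t)
  have hA' : A t = fun y => -t⁻¹ • B t⁻¹ (t⁻¹ • y) := funext (hA t)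
  have hdt : dtC u t x = (-(3 / (2 * t)) * itPow t * phase t x
      + itPow t * (-(Complex.I * (‖x‖ ^ 2 : ℝ) / (2 * t ^ 2)) * phase t x))
        * (starRingEnd ℂ) (uc t⁻¹ (t⁻¹ • x))
      + itPow t * phase t x * (-((t : ℂ) ^ 2)⁻¹ * (starRingEnd ℂ) (dtC uc t⁻¹ (t⁻¹ • x)
        + ∑ k : Fin 3, (x k : ℂ) * pdC k (uc t⁻¹) (t⁻¹ • x))) := by
    have h1 := ((hasDerivAt_itPow ht).mul (hasDerivAt_phase ht x)).mul
      (hasDerivAt_conj_path ht x ((huc.contDiffAt (hopen.mem_nhds (hmem _))).differentiableAt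
        (by norm_num)))
    have h2 : (fun s => u s x)
        = fun s => itPow s * phase s x * (starRingEnd ℂ) (uc s⁻¹ (s⁻¹ • x)) :=
      funext fun s => hu s x
    unfold dtC
    rw [h2]
    exact h1.deriv
  have hdiv : divg (A t) x = -(t⁻¹) ^ 2 * divg (B t⁻¹) (t⁻¹ • x) := by
    unfold divg
    rw [hA', Finset.mul_sum]
    exact Finset.sum_congr rfl fun k _ => pdR_scaled k t⁻¹ hFd x
  have hlap : lapC (u t) x = ∑ k : Fin 3, itPow t * phase t x *
      ((Complex.I / t + (Complex.I / t * x k) ^ 2) * (starRingEnd ℂ) (uc t⁻¹ (t⁻¹ • x))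
        + 2 * (Complex.I / t * x k) * (t : ℂ)⁻¹ * (starRingEnd ℂ) (pdC k (uc t⁻¹) (t⁻¹ • x))
        + ((t : ℂ)⁻¹) ^ 2 * (starRingEnd ℂ) (pdC k (pdC k (uc t⁻¹)) (t⁻¹ • x))) := by
    unfold lapC
    rw [hu']
    exact Finset.sum_congr rfl fun k _ => pdC_pdC_transform k (itPow t) t hf x
  have hpd : ∀ k, pdC k (u t) x = itPow t * phase t x *
      (Complex.I / t * x k * (starRingEnd ℂ) (uc t⁻¹ (t⁻¹ • x))
        + (t : ℂ)⁻¹ * (starRingEnd ℂ) (pdC k (uc t⁻¹) (t⁻¹ • x))) := fun k => by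
    rw [hu']
    exact pdC_transform k (itPow t) t hfd x
  have hAk : ∀ k, A t x k = -t⁻¹ * B t⁻¹ (t⁻¹ • x) k := fun k => by
    rw [hA]
    simp
  have hux : u t x = itPow t * phase t x * (starRingEnd ℂ) (uc t⁻¹ (t⁻¹ • x)) := hu t x
  have hin : (t⁻¹)⁻¹ * ⟪t⁻¹ • x, B t⁻¹ (t⁻¹ • x)⟫ = ∑ k : Fin 3, x k * B t⁻¹ (t⁻¹ • x) k := by
    rw [real_inner_smul_left, inv_inv, mul_inv_cancel_left₀ ht.ne']
    simp [PiLp.inner_apply, mul_comm]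
  have hnorm : ‖x‖ ^ 2 = ∑ k : Fin 3, x k ^ 2 := EuclideanSpace.real_norm_sq_eq x
  rw [hin]
  change _ = (((t^2)⁻¹ : ℝ) : ℂ) * itPow t * phase t x * _
  unfold covLap
  rw [hdt, hdiv, hlap, hux]
  simp only [hpd, hAk, hnorm, lapC, Fin.sum_univ_three, map_add, map_sub, map_mul, map_pow,
    Complex.conj_I, Complex.conj_ofReal, map_one, map_div₀, map_ofNat, Complex.ofReal_add, Complex.ofReal_mul,
    Complex.ofReal_pow, Complex.ofReal_neg, Complex.ofReal_inv]
  generalize itPow t = M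
  generalize phase t x = E
  field_simp
  ring_nf
  simp only [Complex.I_sq]
  ring
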